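/- For every oriented tree-structure Φ, the k-linear map on T_or(Φ) defined by (T,s) ↦ Σ_{e ∈ E(T)} ((T_e^1, s|_{T_e^1}) ⊗ (T_e^2, s|_{T_e^2}) − (T_e^2, s|_{T_e^2}) ⊗ (T_e^1, s|_{T_e^1})) is a Lie cobracket on T_or(Φ). -/

import Mathlib

/-!
Statement 4: for every oriented tree-structure `Φ`, the map
`(T,s) ↦ Σ_{e ∈ E(T)} ((T_e^1, s|) ⊗ (T_e^2, s|) − (T_e^2, s|) ⊗ (T_e^1, s|))` (where
`T_e^2` is the component of `T ∖ {e}` that `e` points to and `T_e^1` the other one) is a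
Lie cobracket on `T_or(Φ)`, the free `k`-module on isomorphism classes of pairs `(T,s)`
with `T` an oriented tree and `s ∈ Φ(T)`.
-/

universe u

open TensorProduct

noncomputable section

section LieCoalg

variable (k : Type*) [CommRing k] (g : Type*) [AddCommGroup g] [Module k g]

/-- `τ_{(12)}` on `g ⊗ g`. -/
def tau2 : g ⊗[k] g →ₗ[k] g ⊗[k] g := (TensorProduct.comm k g g).toLinearMap

/-- `τ_{(132)}` on the triple tensor product `g ⊗ (g ⊗ g)`: `x⊗y⊗z ↦ y⊗z⊗x`. -/
def tau132 : g ⊗[k] (g ⊗[k] g) →ₗ[k] g ⊗[k] (g ⊗[k] g) :=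
  (TensorProduct.assoc k g g g).toLinearMap ∘ₗ
    (TensorProduct.comm k g (g ⊗[k] g)).toLinearMap

/-- `τ_{(123)}` on the triple tensor product: `x⊗y⊗z ↦ z⊗x⊗y`. -/
def tau123 : g ⊗[k] (g ⊗[k] g) →ₗ[k] g ⊗[k] (g ⊗[k] g) :=
  tau132 k g ∘ₗ tau132 k g

variable {k g}

/-- `(δ ⊗ Id) ∘ δ : g → g ⊗ g ⊗ g` (triple tensor product associated as `g ⊗ (g ⊗ g)`). -/
def leftIter (δ : g →ₗ[k] g ⊗[k] g) : g →ₗ[k] g ⊗[k] (g ⊗[k] g) :=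
  ((TensorProduct.assoc k g g g).toLinearMap ∘ₗ LinearMap.rTensor g δ) ∘ₗ δ

/-- `δ : g → g ⊗ g` is a Lie cobracket if `τ_{(12)} ∘ δ = −δ` and
`(Id + τ_{(123)} + τ_{(132)}) ∘ (δ ⊗ Id) ∘ δ = 0` (co-Jacobi identity). -/
def IsLieCobracket (δ : g →ₗ[k] g ⊗[k] g) : Prop :=
  (tau2 k g) ∘ₗ δ = -δ ∧
  (LinearMap.id + tau123 k g + tau132 k g) ∘ₗ leftIter δ = 0

end LieCoalg

/-! ### Oriented trees

Oriented trees are represented by planar rooted trees whose edges carry a `Bool`: the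
flag of an edge is `true` exactly when the edge is oriented away from the root side (the
auxiliary root and planar data are immaterial for the notions below, which only concern
the underlying oriented tree).  Vertices are addressed by lists of child-indices, and an
edge is identified with the address of its endpoint farther from the (auxiliary) root. -/

/-- Planar rooted representations of oriented trees. -/
inductive OTree : Type
  | node : List (Bool × OTree) → OTree

/-- `IsVtxO a T`: the address `a` is a vertex of `T`. -/
def IsVtxO : List ℕ → OTree → Prop
  | [], _ => True
  | i :: a, .node l => ∃ u, l[i]? = some u ∧ IsVtxO a u.2

mutual
/-- The list of all vertex addresses. -/
def vtxListO : OTree → List (List ℕ)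
  | .node l => [] :: vtxListOL 0 l
/-- Auxiliary to `vtxListO`. -/
def vtxListOL : ℕ → List (Bool × OTree) → List (List ℕ)
  | _, [] => []
  | i, (_, u) :: ts => (vtxListO u).map (i :: ·) ++ vtxListOL (i+1) ts
end

/-- The edges, identified with the non-root vertices. -/
def edgeListO (T : OTree) : List (List ℕ) := (vtxListO T).filter (· ≠ [])

/-- The orientation flag of the edge above the vertex `a`. -/
def flagAtO : List ℕ → OTree → Option Bool
  | [], _ => none
  | [i], .node l => (l[i]?).map Prod.fst
  | i :: j :: a, .node l => match l[i]? with
    | some u => flagAtO (j :: a) u.2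
    | none => none

/-- The subtree at the vertex `a`. -/
def subAtO : List ℕ → OTree → Option OTree
  | [], u => some u
  | i :: a, .node l => match l[i]? with
    | some u => subAtO a u.2
    | none => none

/-- The tree with the subtree at the (non-root) vertex `a` removed. -/
def pruneO : List ℕ → OTree → OTree
  | [], u => u
  | [i], .node l => .node (l.eraseIdx i)
  | i :: j :: a, .node l => match l[i]? with
    | some u => .node (l.set i (u.1, pruneO (j :: a) u.2))
    | none => .node l

/-- The canonical embedding of the vertices of `pruneO a T` into the vertices of `T`. -/
def pruneEmbO (a : List ℕ) (b : List ℕ) : List ℕ :=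
  match a.getLast? with
  | none => b
  | some i =>
      let a' := a.dropLast
      if a'.isPrefixOf b then
        match b.drop a'.length with
        | [] => b
        | j :: rest => if i ≤ j then a' ++ (j+1) :: rest else b
      else b

/-- `DirEdge T x y`: the vertices `x, y` of `T` are joined by an edge oriented from `x`
to `y`. -/
def DirEdge (T : OTree) (x y : List ℕ) : Prop :=
  (∃ j, y = x ++ [j] ∧ flagAtO y T = some true) ∨
  (∃ j, x = y ++ [j] ∧ flagAtO x T = some false)

/-- An (orientation-preserving) embedding of oriented trees `T → T'`, given as a map on
vertex addresses: injective on vertices and sending each oriented edge to an oriented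
edge. -/
def IsOEmbedding (T T' : OTree) (f : List ℕ → List ℕ) : Prop :=
  (∀ a, IsVtxO a T → IsVtxO (f a) T') ∧
  (∀ a b, IsVtxO a T → IsVtxO b T → f a = f b → a = b) ∧
  (∀ a i, IsVtxO (a ++ [i]) T →
    ((flagAtO (a ++ [i]) T = some true ∧ DirEdge T' (f a) (f (a ++ [i]))) ∨
     (flagAtO (a ++ [i]) T = some false ∧ DirEdge T' (f (a ++ [i])) (f a))))

/-- An oriented tree-structure: a contravariant functor from the category of oriented
trees and orientation-preserving embeddings to sets. -/
structure OTreeStructure : Type (u + 1) where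
  /-- The set attached to each oriented tree. -/
  F : OTree → Type u
  /-- Restriction along an embedding. -/
  res : ∀ {T T' : OTree} (f : List ℕ → List ℕ), IsOEmbedding T T' f → F T' → F T
  res_id : ∀ (T : OTree) (h : IsOEmbedding T T id) (x : F T), res id h x = x
  res_comp : ∀ {T T' T'' : OTree} (f g : List ℕ → List ℕ)
      (hf : IsOEmbedding T T' f) (hg : IsOEmbedding T' T'' g)
      (hgf : IsOEmbedding T T'' (g ∘ f)) (x : F T''),
      res (g ∘ f) hgf x = res f hf (res g hg x)

/-- Pairs `(T, s)` with `T` an oriented tree and `s ∈ Φ(T)`. -/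
def OTS (Φ : OTreeStructure.{u}) : Type u := Σ T : OTree, Φ.F T

/-- Isomorphism of pairs: an isomorphism of oriented trees (a surjective embedding,
which may move the auxiliary root) whose pullback carries the structure of one pair to
that of the other. -/
def pairRelO (Φ : OTreeStructure.{u}) (x y : OTS Φ) : Prop :=
  ∃ (f : List ℕ → List ℕ) (h : IsOEmbedding x.1 y.1 f),
    (∀ b, IsVtxO b y.1 → ∃ a, IsVtxO a x.1 ∧ f a = b) ∧ Φ.res f h y.2 = x.2

/-- Isomorphism classes of pairs `(T, s)`. -/
def OTSIso (Φ : OTreeStructure.{u}) : Type u := Quot (pairRelO Φ)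

open scoped Classical

/-- The sum of a list of elements of an additive commutative monoid. -/
def lsum {M : Type*} [AddCommMonoid M] (l : List M) : M := l.foldr (· + ·) 0

/-- The zero element of a tensor product. -/
def tzero (k : Type*) [CommRing k] (M N : Type*) [AddCommGroup M] [Module k M]
    [AddCommGroup N] [Module k N] : M ⊗[k] N := 0

variable (k : Type*) [CommRing k] (Φ : OTreeStructure.{u})

/-- `T_or(Φ)`: the free `k`-module on the isomorphism classes of pairs `(T,s)`. -/
abbrev TorS := OTSIso Φ →₀ k

/-- The summand corresponding to the edge `e` of the pair `(T,s)`: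
`(T_e^1, s|) ⊗ (T_e^2, s|) − (T_e^2, s|) ⊗ (T_e^1, s|)`, where `T_e^2` is the component
of `T ∖ {e}` that `e` points to. -/
def rhoOSTerm (p : OTS Φ) (e : List ℕ) : TorS k Φ ⊗[k] TorS k Φ :=
  match subAtO e p.1 with
  | some A =>
      let B := pruneO e p.1
      if h : IsOEmbedding A p.1 (fun b => e ++ b) ∧ IsOEmbedding B p.1 (pruneEmbO e)
      then
        let xA : TorS k Φ :=
          Finsupp.single (Quot.mk (pairRelO Φ) ⟨A, Φ.res _ h.1 p.2⟩) (1 : k)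
        let xB : TorS k Φ :=
          Finsupp.single (Quot.mk (pairRelO Φ) ⟨B, Φ.res _ h.2 p.2⟩) (1 : k)
        -- the flag of `e` is `true` iff `e` points away from the root side,
        -- i.e. towards the subtree `A` at `e`
        let x1 : TorS k Φ := if flagAtO e p.1 = some true then xB else xA
        let x2 : TorS k Φ := if flagAtO e p.1 = some true then xA else xB
        x1 ⊗ₜ[k] x2 - x2 ⊗ₜ[k] x1
      else tzero k _ _
  | none => tzero k _ _

/-- The Lie cobracket
`(T,s) ↦ Σ_{e ∈ E(T)} ((T_e^1, s|) ⊗ (T_e^2, s|) − (T_e^2, s|) ⊗ (T_e^1, s|))` on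
`T_or(Φ)` (computed on a representative pair; the result does not depend on the
choice). -/
def rhoOS : TorS k Φ →ₗ[k] TorS k Φ ⊗[k] TorS k Φ :=
  Finsupp.lift (TorS k Φ ⊗[k] TorS k Φ) k (OTSIso Φ) fun q =>
    lsum ((edgeListO q.out.1).map (rhoOSTerm k Φ q.out))

/-! ### Vertices, flags and connectedness -/

theorem isVtxO_nil (T : OTree) : IsVtxO [] T := by
  cases T; trivial

theorem flagAtO_nil (T : OTree) : flagAtO [] T = none := by
  cases T; rfl

theorem isVtxO_iff_flagAtO (a : List ℕ) (T : OTree) :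
    IsVtxO a T ↔ a = [] ∨ (flagAtO a T).isSome := by
  induction a generalizing T with
  | nil => simp [isVtxO_nil]
  | cons i a ih =>
    obtain ⟨l⟩ := T
    cases a with
    | nil => cases h : l[i]? <;> simp [IsVtxO, flagAtO, h]
    | cons j a => cases h : l[i]? <;> simp [IsVtxO, flagAtO, h, ih]

theorem IsVtxO.of_append {a b : List ℕ} {T : OTree} (h : IsVtxO (a ++ b) T) : IsVtxO a T := by
  induction a generalizing T with
  | nil => exact isVtxO_nil T
  | cons i a ih =>
    obtain ⟨l⟩ := T
    obtain ⟨u, hu, h⟩ := h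
    exact ⟨u, hu, ih h⟩

/-- A property which is invariant along edges is constant on the vertices of a tree. -/
theorem IsVtxO.iff_of_edges {T : OTree} {P : List ℕ → Prop}
    (h : ∀ a i, IsVtxO (a ++ [i]) T → (P (a ++ [i]) ↔ P a)) {a b : List ℕ}
    (ha : IsVtxO a T) (hb : IsVtxO b T) : P a ↔ P b := by
  have root : ∀ c, IsVtxO c T → (P c ↔ P []) := by
    intro c
    induction c using List.reverseRecOn with
    | nil => simp
    | append_singleton c i ih => exact fun hc => (h c i hc).trans (ih hc.of_append)
  exact (root a ha).trans (root b hb).symm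

mutual
theorem mem_vtxListO (T : OTree) (a : List ℕ) : a ∈ vtxListO T ↔ IsVtxO a T := by
  match T, a with
  | .node l, [] => simp [vtxListO, IsVtxO]
  | .node l, i :: a => simp [vtxListO, IsVtxO, mem_vtxListOL l 0 (i :: a)]
theorem mem_vtxListOL (l : List (Bool × OTree)) (n : ℕ) (a : List ℕ) :
    a ∈ vtxListOL n l ↔ ∃ i b, a = (n + i) :: b ∧ ∃ u, l[i]? = some u ∧ IsVtxO b u.2 := by
  match l with
  | [] => simp [vtxListOL]
  | (o, u) :: ts =>
    simp only [vtxListOL, List.mem_append, List.mem_map, mem_vtxListO u,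
      mem_vtxListOL ts (n + 1) a]
    constructor
    · rintro (⟨b, hb, rfl⟩ | ⟨i, b, rfl, h⟩)
      · exact ⟨0, b, rfl, _, rfl, hb⟩
      · exact ⟨i + 1, b, by congr 1; omega, by simpa using h⟩
    · rintro ⟨i, b, rfl, v, hv, hb⟩
      cases i with
      | zero =>
        obtain rfl : (o, u) = v := by simpa using hv
        exact .inl ⟨b, hb, rfl⟩
      | succ i => exact .inr ⟨i, b, by congr 1; omega, v, by simpa using hv, hb⟩
end

mutual
theorem nodup_vtxListO (T : OTree) : (vtxListO T).Nodup := by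
  match T with
  | .node l => simp [vtxListO, nodup_vtxListOL l 0, mem_vtxListOL l 0]
theorem nodup_vtxListOL (l : List (Bool × OTree)) (n : ℕ) : (vtxListOL n l).Nodup := by
  match l with
  | [] => simp [vtxListOL]
  | (o, u) :: ts =>
    refine ((nodup_vtxListO u).map (List.cons_injective)).append (nodup_vtxListOL ts (n + 1)) ?_
    intro a ha hb
    obtain ⟨b, -, rfl⟩ := List.mem_map.1 ha
    obtain ⟨i, c, h, -⟩ := (mem_vtxListOL ts (n + 1) _).1 hb
    simp only [List.cons.injEq] at h
    omega
end

/-- The edges of a tree, identified with the non-root vertices. -/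
def edgeFinsetO (T : OTree) : Finset (List ℕ) := (edgeListO T).toFinset

theorem mem_edgeFinsetO {T : OTree} {e : List ℕ} :
    e ∈ edgeFinsetO T ↔ IsVtxO e T ∧ e ≠ [] := by
  simp [edgeFinsetO, edgeListO, mem_vtxListO]

theorem lsum_map_edgeListO {M : Type*} [AddCommMonoid M] (T : OTree) (f : List ℕ → M) :
    lsum ((edgeListO T).map f) = ∑ e ∈ edgeFinsetO T, f e := by
  have h : (edgeListO T).Nodup := (nodup_vtxListO T).filter _
  rw [edgeFinsetO, List.sum_toFinset f h]
  rfl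

/-! ### Embeddings -/

theorem IsOEmbedding.of_flagAtO {T T' : OTree} {f : List ℕ → List ℕ}
    (vtx : ∀ a, IsVtxO a T → IsVtxO (f a) T')
    (inj : ∀ a b, IsVtxO a T → IsVtxO b T → f a = f b → a = b)
    (edge : ∀ a i, IsVtxO (a ++ [i]) T → (∃ j, f (a ++ [i]) = f a ++ [j]) ∧
      flagAtO (f (a ++ [i])) T' = flagAtO (a ++ [i]) T) : IsOEmbedding T T' f := by
  refine ⟨vtx, inj, fun a i h => ?_⟩
  obtain ⟨⟨j, hj⟩, hf⟩ := edge a i h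
  obtain ⟨o, ho⟩ := Option.isSome_iff_exists.1
    (((isVtxO_iff_flagAtO _ _).1 h).resolve_left (by simp))
  rw [ho] at hf ⊢
  cases o
  · exact .inr ⟨rfl, .inr ⟨j, hj, hf⟩⟩
  · exact .inl ⟨rfl, .inl ⟨j, hj, hf⟩⟩

theorem IsOEmbedding.id (T : OTree) : IsOEmbedding T T id :=
  .of_flagAtO (fun _ h => h) (fun _ _ _ _ h => h) fun _ i _ => ⟨⟨i, rfl⟩, rfl⟩

theorem IsOEmbedding.congr {T T' : OTree} {f g : List ℕ → List ℕ} (h : IsOEmbedding T T' f)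
    (hfg : ∀ a, IsVtxO a T → g a = f a) : IsOEmbedding T T' g := by
  refine ⟨fun a ha => hfg a ha ▸ h.1 a ha, fun a b ha hb => ?_, fun a i ha => ?_⟩
  · rw [hfg a ha, hfg b hb]
    exact h.2.1 a b ha hb
  · rw [hfg _ ha, hfg a ha.of_append]
    exact h.2.2 a i ha

/-- The image of an edge: it keeps or reverses its direction relative to the roots. -/
theorem IsOEmbedding.edge {T T' : OTree} {g : List ℕ → List ℕ} (h : IsOEmbedding T T' g)
    {a : List ℕ} {i : ℕ} (hv : IsVtxO (a ++ [i]) T) :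
    (∃ j, g (a ++ [i]) = g a ++ [j] ∧ flagAtO (g (a ++ [i])) T' = flagAtO (a ++ [i]) T) ∨
    (∃ j, g a = g (a ++ [i]) ++ [j] ∧
      flagAtO (g a) T' = (flagAtO (a ++ [i]) T).map Bool.not) := by
  rcases h.2.2 a i hv with ⟨hf, ⟨j, hj, hf'⟩ | ⟨j, hj, hf'⟩⟩ | ⟨hf, ⟨j, hj, hf'⟩ | ⟨j, hj, hf'⟩⟩
  · exact .inl ⟨j, hj, hf'.trans hf.symm⟩
  · exact .inr ⟨j, hj, by rw [hf, hf']; rfl⟩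
  · exact .inr ⟨j, hj, by rw [hf, hf']; rfl⟩
  · exact .inl ⟨j, hj, hf'.trans hf.symm⟩

theorem DirEdge.map {T T' : OTree} {g : List ℕ → List ℕ} (h : IsOEmbedding T T' g)
    {x y : List ℕ} (hx : IsVtxO x T) (hy : IsVtxO y T) (hxy : DirEdge T x y) :
    DirEdge T' (g x) (g y) := by
  rcases hxy with ⟨j, rfl, hf⟩ | ⟨j, rfl, hf⟩
  · exact ((h.2.2 x j hy).resolve_right (by simp [hf])).2
  · exact ((h.2.2 y j hx).resolve_left (by simp [hf])).2

theorem IsOEmbedding.comp {T T' T'' : OTree} {f g : List ℕ → List ℕ}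
    (hg : IsOEmbedding T' T'' g) (hf : IsOEmbedding T T' f) : IsOEmbedding T T'' (g ∘ f) := by
  refine ⟨fun a ha => hg.1 _ (hf.1 a ha), fun a b ha hb hab =>
    hf.2.1 a b ha hb (hg.2.1 _ _ (hf.1 a ha) (hf.1 b hb) hab), fun a i ha => ?_⟩
  have h1 := hf.1 _ ha
  have h2 := hf.1 _ ha.of_append
  exact (hf.2.2 a i ha).imp (fun h => ⟨h.1, h.2.map hg h2 h1⟩) fun h => ⟨h.1, h.2.map hg h1 h2⟩

theorem not_prefix_dropLast {e : List ℕ} (he : e ≠ []) : ¬ e <+: e.dropLast := by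
  intro h
  have := h.length_le
  have := List.length_pos_iff.2 he
  simp only [List.length_dropLast] at *
  omega

/-- An edge whose image crosses the cut at `e` is mapped to the edge `e`. -/
theorem IsOEmbedding.eq_of_cross {T T' : OTree} {g : List ℕ → List ℕ} (h : IsOEmbedding T T' g)
    {e c : List ℕ} {l : ℕ} (hv : IsVtxO (c ++ [l]) T)
    (hc : ¬ (e <+: g (c ++ [l]) ↔ e <+: g c)) :
    (g (c ++ [l]) = e ∧ g c = e.dropLast) ∨ (g c = e ∧ g (c ++ [l]) = e.dropLast) := by
  rcases h.edge hv with ⟨j, hj, -⟩ | ⟨j, hj, -⟩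
  · left
    rw [hj, List.prefix_concat_iff] at hc
    obtain rfl : e = g c ++ [j] := by tauto
    simp [hj]
  · right
    rw [hj, List.prefix_concat_iff] at hc
    obtain rfl : e = g (c ++ [l]) ++ [j] := by tauto
    simp [hj]

/-- Vertices with adjacent images are adjacent. -/
theorem IsOEmbedding.adj_of_eq {T T' : OTree} {g : List ℕ → List ℕ} (h : IsOEmbedding T T' g)
    {a b : List ℕ} (ha : IsVtxO a T) (hb : IsVtxO b T) (he : g b ≠ [])
    (hab : g a = (g b).dropLast) : (∃ i, b = a ++ [i]) ∨ (∃ i, a = b ++ [i]) := by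
  by_contra hcon
  have key := IsVtxO.iff_of_edges (P := fun c => g b <+: g c) (T := T) ?_ hb ha
  · exact not_prefix_dropLast he (hab ▸ key.1 List.prefix_rfl)
  · intro c l hc
    by_contra hcross
    apply hcon
    rcases h.eq_of_cross hc hcross with ⟨h1, h2⟩ | ⟨h1, h2⟩
    · exact .inl ⟨l, by
        rw [← h.2.1 _ _ hc hb h1, h.2.1 _ _ hc.of_append ha (h2.trans hab.symm)]⟩
    · exact .inr ⟨l, by
        rw [← h.2.1 _ _ hc ha (h2.trans hab.symm), h.2.1 _ _ hc.of_append hb h1]⟩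

theorem IsOEmbedding.dirEdge_of_map {T T' : OTree} {g : List ℕ → List ℕ}
    (h : IsOEmbedding T T' g) {x y : List ℕ} (hx : IsVtxO x T) (hy : IsVtxO y T)
    (hxy : DirEdge T' (g x) (g y)) : DirEdge T x y := by
  have adj : (∃ i, y = x ++ [i]) ∨ (∃ i, x = y ++ [i]) := by
    rcases hxy with ⟨j, hj, -⟩ | ⟨j, hj, -⟩
    · exact h.adj_of_eq hx hy (by simp [hj]) (by simp [hj])
    · exact (h.adj_of_eq hy hx (by simp [hj]) (by simp [hj])).symm
  have asymm : ¬ DirEdge T' (g y) (g x) := by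
    rcases hxy with ⟨j, hj, hf⟩ | ⟨j, hj, hf⟩ <;> rintro (⟨j', hj', hf'⟩ | ⟨j', hj', hf'⟩)
    · simpa [hj] using congrArg List.length hj'
    · simp [hf] at hf'
    · simp [hf] at hf'
    · simpa [hj] using congrArg List.length hj'
  rcases adj with ⟨i, rfl⟩ | ⟨i, rfl⟩
  · exact .inl ⟨i, rfl, ((h.2.2 x i hy).resolve_right fun h' => asymm h'.2).1⟩
  · exact .inr ⟨i, rfl, ((h.2.2 y i hx).resolve_left fun h' => asymm h'.2).1⟩

/-- The edge (identified with its endpoint farther from the root) which is the image of the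
edge `e` under `g`. -/
def edgeMapO (g : List ℕ → List ℕ) (e : List ℕ) : List ℕ :=
  if (g e.dropLast).length < (g e).length then g e else g e.dropLast

/-- An embedding matches the two sides of an edge with the two sides of its image. -/
theorem IsOEmbedding.edgeMapO_spec {T T' : OTree} {g : List ℕ → List ℕ}
    (h : IsOEmbedding T T' g) {e : List ℕ} (hv : IsVtxO e T) (he : e ≠ []) :
    (edgeMapO g e = g e ∧ (edgeMapO g e).dropLast = g e.dropLast ∧ g e ≠ [] ∧
      flagAtO (edgeMapO g e) T' = flagAtO e T ∧
      ∀ c, IsVtxO c T → (edgeMapO g e <+: g c ↔ e <+: c)) ∨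
    (edgeMapO g e = g e.dropLast ∧ (edgeMapO g e).dropLast = g e ∧ g e.dropLast ≠ [] ∧
      flagAtO (edgeMapO g e) T' = (flagAtO e T).map Bool.not ∧
      ∀ c, IsVtxO c T → (edgeMapO g e <+: g c ↔ ¬ e <+: c)) := by
  obtain ⟨a, i, rfl⟩ := (List.eq_nil_or_concat e).resolve_left he
  simp only [List.concat_eq_append] at *
  have ha := hv.of_append
  rcases h.edge hv with ⟨j, hj, hf⟩ | ⟨j, hj, hf⟩
  · have hm : edgeMapO g (a ++ [i]) = g (a ++ [i]) := by simp [edgeMapO, hj]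
    refine .inl ⟨hm, by simp [hm, hj], by simp [hj], by rw [hm, hf], fun c hc => ?_⟩
    rw [hm]
    have key := IsVtxO.iff_of_edges (T := T)
      (P := fun c => (g (a ++ [i]) <+: g c ↔ a ++ [i] <+: c)) ?_ hc hv
    · exact key.2 (by simp)
    · intro c l hcl
      by_cases hcross : g (a ++ [i]) <+: g (c ++ [l]) ↔ g (a ++ [i]) <+: g c
      · by_cases hne : a ++ [i] = c ++ [l]
        · have : c = a := by simpa using congrArg List.dropLast hne.symm
          rw [← hne, this] at hcross
          simpa [hj] using (hcross.1 List.prefix_rfl).length_le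
        · rw [hcross, List.prefix_concat_iff (l₂ := c)]
          tauto
      · rcases h.eq_of_cross hcl hcross with ⟨h1, h2⟩ | ⟨h1, h2⟩
        · have e1 := h.2.1 _ _ hcl hv h1
          have e2 : c = a := by simpa using congrArg List.dropLast e1
          rw [e1, e2, hj]
          simp only [List.prefix_rfl, true_iff]
          have n1 : ¬ g a ++ [j] <+: g a := fun h => by simpa using h.length_le
          have n2 : ¬ a ++ [i] <+: a := fun h => by simpa using h.length_le
          tauto
        · have e1 := h.2.1 _ _ hcl.of_append hv h1
          have e2 := h.2.1 _ _ hcl ha (by simpa [hj] using h2)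
          have := congrArg List.length e1
          have := congrArg List.length e2
          simp only [List.length_append, List.length_singleton] at *
          omega
  · have hm : edgeMapO g (a ++ [i]) = g a := by simp [edgeMapO, hj]
    refine .inr ⟨by simp [hm], by simp [hm, hj], by simp [hj], by rw [hm, hf], fun c hc => ?_⟩
    rw [hm]
    have n1 : ¬ g (a ++ [i]) ++ [j] <+: g (a ++ [i]) := fun h => by simpa using h.length_le
    have n2 : ¬ a ++ [i] <+: a := fun h => by simpa using h.length_le
    have key := IsVtxO.iff_of_edges (T := T)
      (P := fun c => (g a <+: g c ↔ ¬ a ++ [i] <+: c)) ?_ hc ha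
    · exact key.2 (by simpa using n2)
    · intro c l hcl
      by_cases hne : c ++ [l] = a ++ [i]
      · have e2 : c = a := by simpa using congrArg List.dropLast hne
        rw [hne, e2]
        simp only [hj]
        simp [n1, n2]
      · by_cases hcross : g a <+: g (c ++ [l]) ↔ g a <+: g c
        · rw [hcross, List.prefix_concat_iff (l₂ := c)]
          tauto
        · exfalso
          rcases h.eq_of_cross hcl hcross with ⟨h1, h2⟩ | ⟨h1, h2⟩
          · have e1 := h.2.1 _ _ hcl ha h1
            have e2 := h.2.1 _ _ hcl.of_append hv (by simpa [hj] using h2)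
            have := congrArg List.length e1
            have := congrArg List.length e2
            simp only [List.length_append, List.length_singleton] at *
            omega
          · exact hne (h.2.1 _ _ hcl hv (by simpa [hj] using h2))

/-! ### The two components of the complement of an edge -/

theorem exists_subAtO {e : List ℕ} {T : OTree} (h : IsVtxO e T) : ∃ A, subAtO e T = some A := by
  induction e generalizing T with
  | nil => exact ⟨T, by cases T; rfl⟩
  | cons i e ih =>
    obtain ⟨l⟩ := T
    obtain ⟨u, hu, h⟩ := h
    simpa [subAtO, hu] using ih h

theorem flagAtO_append_of_subAtO {e b : List ℕ} {T A : OTree} (h : subAtO e T = some A)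
    (hb : b ≠ []) : flagAtO (e ++ b) T = flagAtO b A := by
  induction e generalizing T with
  | nil =>
    obtain rfl : T = A := by cases T; simpa [subAtO] using h
    rfl
  | cons i e ih =>
    obtain ⟨l⟩ := T
    cases hu : l[i]? with
    | none => simp [subAtO, hu] at h
    | some u =>
      rw [← ih (by simpa [subAtO, hu] using h)]
      obtain ⟨j, t, ht⟩ := List.exists_cons_of_ne_nil (List.append_ne_nil_of_right_ne_nil e hb)
      simp [ht, flagAtO, hu]

theorem isVtxO_append_iff_of_subAtO {e b : List ℕ} {T A : OTree} (h : subAtO e T = some A)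
    (he : IsVtxO e T) : IsVtxO (e ++ b) T ↔ IsVtxO b A := by
  by_cases hb : b = []
  · simp [hb, isVtxO_nil, he]
  · simp [isVtxO_iff_flagAtO, hb, flagAtO_append_of_subAtO h hb]

theorem isOEmbedding_append {e : List ℕ} {T A : OTree} (h : subAtO e T = some A)
    (he : IsVtxO e T) : IsOEmbedding A T (fun b => e ++ b) :=
  .of_flagAtO (fun _ => (isVtxO_append_iff_of_subAtO h he).2)
    (fun _ _ _ _ => List.append_cancel_left)
    fun a i _ => ⟨⟨i, by simp⟩, flagAtO_append_of_subAtO h (by simp)⟩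

theorem image_append {e : List ℕ} {T A : OTree} (h : subAtO e T = some A) (he : IsVtxO e T) :
    (fun b => e ++ b) '' {b | IsVtxO b A} = {x | IsVtxO x T ∧ e <+: x} := by
  ext x
  constructor
  · rintro ⟨b, hb, rfl⟩
    exact ⟨(isVtxO_append_iff_of_subAtO h he).2 hb, List.prefix_append _ _⟩
  · rintro ⟨hx, b, rfl⟩
    exact ⟨b, (isVtxO_append_iff_of_subAtO h he).1 hx, rfl⟩

theorem pruneEmbO_nil_right (e : List ℕ) : pruneEmbO e [] = [] := by
  unfold pruneEmbO
  split
  · rfl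
  · simp

theorem pruneEmbO_singleton_cons (i j : ℕ) (b : List ℕ) :
    pruneEmbO [i] (j :: b) = if i ≤ j then (j + 1) :: b else j :: b := by
  simp [pruneEmbO]

theorem pruneEmbO_cons_cons (i j i' : ℕ) (e b : List ℕ) :
    pruneEmbO (i :: j :: e) (i' :: b) =
      if i = i' then i' :: pruneEmbO (j :: e) b else i' :: b := by
  unfold pruneEmbO
  rw [List.getLast?_cons_cons, List.getLast?_eq_some_getLast (List.cons_ne_nil j e)]
  simp only [List.dropLast_cons_cons, List.isPrefixOf]
  by_cases h : i = i'
  · subst h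
    simp only [beq_self_eq_true, Bool.true_and, List.length_cons, List.drop_succ_cons]
    split <;> [split; simp]
    · simp
    · split <;> simp
  · simp [h]

theorem pruneEmbO_injective (e : List ℕ) : Function.Injective (pruneEmbO e) := by
  induction e with
  | nil => exact fun _ _ h => h
  | cons i e ih =>
    intro b c h
    cases e with
    | nil =>
      cases b <;> cases c <;> simp only [pruneEmbO_nil_right, pruneEmbO_singleton_cons] at h <;>
        grind
    | cons j e =>
      cases b <;> cases c <;> simp only [pruneEmbO_nil_right, pruneEmbO_cons_cons] at h <;>
        grind [Function.Injective]

theorem pruneEmbO_append_singleton (e b : List ℕ) (i : ℕ) :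
    ∃ j, pruneEmbO e (b ++ [i]) = pruneEmbO e b ++ [j] := by
  induction e generalizing b with
  | nil => exact ⟨i, rfl⟩
  | cons l e ih =>
    cases e with
    | nil =>
      cases b <;> simp only [List.nil_append, List.cons_append, pruneEmbO_nil_right,
        pruneEmbO_singleton_cons] <;> split <;> simp
    | cons j e =>
      cases b with
      | nil =>
        simp only [List.nil_append, pruneEmbO_nil_right, pruneEmbO_cons_cons]
        split <;> simp
      | cons m b =>
        simp only [List.cons_append, pruneEmbO_cons_cons]
        split
        · simpa using ih b
        · simp

theorem range_pruneEmbO {e : List ℕ} (he : e ≠ []) :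
    Set.range (pruneEmbO e) = {x | ¬ e <+: x} := by
  induction e with
  | nil => exact absurd rfl he
  | cons i e ih =>
    ext x
    simp only [Set.mem_range, Set.mem_ofPred_eq]
    cases e with
    | nil =>
      constructor
      · rintro ⟨b | ⟨m, b⟩, rfl⟩
        · simp [pruneEmbO_nil_right]
        · rw [pruneEmbO_singleton_cons]
          split <;> simp <;> omega
      · intro hx
        cases x with
        | nil => exact ⟨[], pruneEmbO_nil_right _⟩
        | cons m x =>
          have hm : i ≠ m := by simpa using hx
          by_cases h : i ≤ m
          · refine ⟨(m - 1) :: x, ?_⟩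
            rw [pruneEmbO_singleton_cons, if_pos (by omega)]
            congr 1
            omega
          · exact ⟨m :: x, by rw [pruneEmbO_singleton_cons, if_neg h]⟩
    | cons j e =>
      constructor
      · rintro ⟨b | ⟨m, b⟩, rfl⟩
        · simp [pruneEmbO_nil_right]
        · rw [pruneEmbO_cons_cons]
          split
          · have : pruneEmbO (j :: e) b ∈ {x | ¬ j :: e <+: x} := by
              rw [← ih (by simp)]
              exact ⟨b, rfl⟩
            simpa [List.cons_prefix_cons] using fun _ => this
          · simp_all [List.cons_prefix_cons]
      · intro hx
        cases x with
        | nil => exact ⟨[], pruneEmbO_nil_right _⟩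
        | cons m x =>
          by_cases h : i = m
          · subst h
            have : x ∈ Set.range (pruneEmbO (j :: e)) := by
              rw [ih (by simp)]
              simpa [List.cons_prefix_cons] using hx
            obtain ⟨b, rfl⟩ := this
            exact ⟨i :: b, by simp [pruneEmbO_cons_cons]⟩
          · exact ⟨m :: x, by rw [pruneEmbO_cons_cons, if_neg h]⟩

theorem flagAtO_singleton (i : ℕ) (l : List (Bool × OTree)) :
    flagAtO [i] (.node l) = (l[i]?).map Prod.fst := rfl

theorem flagAtO_cons {a : List ℕ} (ha : a ≠ []) (i : ℕ) (l : List (Bool × OTree)) :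
    flagAtO (i :: a) (.node l) = (l[i]?).bind fun u => flagAtO a u.2 := by
  obtain ⟨j, a, rfl⟩ := List.exists_cons_of_ne_nil ha
  cases h : l[i]? <;> simp [flagAtO, h]

theorem pruneEmbO_eq_nil_iff {e b : List ℕ} : pruneEmbO e b = [] ↔ b = [] :=
  ⟨fun h => pruneEmbO_injective e (h.trans (pruneEmbO_nil_right e).symm),
    fun h => h ▸ pruneEmbO_nil_right e⟩

theorem flagAtO_pruneEmbO {e : List ℕ} {T : OTree} (he : IsVtxO e T) (b : List ℕ) :
    flagAtO (pruneEmbO e b) T = flagAtO b (pruneO e T) := by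
  induction e generalizing T b with
  | nil => cases T; rfl
  | cons i e ih =>
    obtain ⟨l⟩ := T
    obtain ⟨u, hu, he⟩ := he
    cases b with
    | nil => simp [pruneEmbO_nil_right, flagAtO_nil]
    | cons m b =>
      cases e with
      | nil =>
        rw [pruneEmbO_singleton_cons]
        have hm : l[if i ≤ m then m + 1 else m]? = (l.eraseIdx i)[m]? := by
          rw [List.getElem?_eraseIdx]
          split_ifs <;> first | rfl | omega
        rw [← apply_ite (fun x => x :: b), pruneO]
        by_cases hb : b = []
        · rw [hb, flagAtO_singleton, flagAtO_singleton, hm]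
        · rw [flagAtO_cons hb, flagAtO_cons hb, hm]
      | cons j e =>
        rw [pruneEmbO_cons_cons]
        have hp : pruneO (i :: j :: e) (.node l) =
            .node (l.set i (u.1, pruneO (j :: e) u.2)) := by simp [pruneO, hu]
        have hi : i < l.length := (List.getElem?_eq_some_iff.1 hu).1
        rw [hp]
        split_ifs with him
        · subst him
          by_cases hb : b = []
          · rw [hb, pruneEmbO_nil_right, flagAtO_singleton, flagAtO_singleton, hu,
              List.getElem?_set_self hi]
            rfl
          · rw [flagAtO_cons hb, flagAtO_cons (mt pruneEmbO_eq_nil_iff.1 hb), hu,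
              List.getElem?_set_self hi]
            exact ih he b
        · by_cases hb : b = []
          · rw [hb, flagAtO_singleton, flagAtO_singleton, List.getElem?_set_ne him]
          · rw [flagAtO_cons hb, flagAtO_cons hb, List.getElem?_set_ne him]

theorem isVtxO_pruneEmbO_iff {e : List ℕ} {T : OTree} (he : IsVtxO e T) {b : List ℕ} :
    IsVtxO (pruneEmbO e b) T ↔ IsVtxO b (pruneO e T) := by
  rw [isVtxO_iff_flagAtO, isVtxO_iff_flagAtO, flagAtO_pruneEmbO he, pruneEmbO_eq_nil_iff]

theorem isOEmbedding_pruneEmbO {e : List ℕ} {T : OTree} (he : IsVtxO e T) :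
    IsOEmbedding (pruneO e T) T (pruneEmbO e) :=
  .of_flagAtO (fun _ => (isVtxO_pruneEmbO_iff he).2)
    (fun _ _ _ _ h => pruneEmbO_injective e h)
    fun a i _ => ⟨pruneEmbO_append_singleton e a i, flagAtO_pruneEmbO he _⟩

theorem image_pruneEmbO {e : List ℕ} {T : OTree} (he : IsVtxO e T) (hne : e ≠ []) :
    pruneEmbO e '' {b | IsVtxO b (pruneO e T)} = {x | IsVtxO x T ∧ ¬ e <+: x} := by
  ext x
  have hr : x ∈ Set.range (pruneEmbO e) ↔ ¬ e <+: x := by rw [range_pruneEmbO hne]; rfl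
  constructor
  · rintro ⟨b, hb, rfl⟩
    exact ⟨(isVtxO_pruneEmbO_iff he).2 hb, hr.1 ⟨b, rfl⟩⟩
  · rintro ⟨hx, hex⟩
    obtain ⟨b, rfl⟩ := hr.2 hex
    exact ⟨b, (isVtxO_pruneEmbO_iff he).1 hx, rfl⟩

/-! ### Isomorphism classes of restrictions -/

section Classes

variable {Φ : OTreeStructure.{u}}

variable {T₀ : OTree}

/-- The pair `(T, s)`. -/
def pairO {T : OTree} (s : Φ.F T) : OTS Φ := ⟨T, s⟩

/-- The isomorphism class of the pair `(T, s)`. -/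
def isoClassO {T : OTree} (s : Φ.F T) : OTSIso Φ := Quot.mk (pairRelO Φ) (pairO s)

theorem res_eq_of_eq {T T' : OTree} {f g : List ℕ → List ℕ} (hfg : f = g)
    (hf : IsOEmbedding T T' f) (hg : IsOEmbedding T T' g) (s : Φ.F T') :
    Φ.res f hf s = Φ.res g hg s := by
  subst hfg; rfl

theorem isoClassO_res {T T' : OTree} {f : List ℕ → List ℕ} (hf : IsOEmbedding T T' f)
    (hsurj : ∀ b, IsVtxO b T' → ∃ a, IsVtxO a T ∧ f a = b) (s : Φ.F T') :
    isoClassO (Φ.res f hf s) = isoClassO s :=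
  Quot.sound ⟨f, hf, hsurj, rfl⟩

/-- The class of a restriction depends only on the values of the embedding on vertices. -/
theorem isoClassO_res_congr {T T' : OTree} {f g : List ℕ → List ℕ} (hf : IsOEmbedding T T' f)
    (hg : IsOEmbedding T T' g) (hfg : ∀ a, IsVtxO a T → f a = g a) (s : Φ.F T') :
    isoClassO (Φ.res f hf s) = isoClassO (Φ.res g hg s) := by
  let r : List ℕ → List ℕ := fun a => if IsVtxO a T then a else []
  have hr : ∀ a, IsVtxO a T → r a = a := fun a ha => if_pos ha
  have hrT : ∀ a, IsVtxO (r a) T := fun a => by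
    by_cases h : IsVtxO a T
    · rwa [hr a h]
    · simp only [r, if_neg h, isVtxO_nil]
  have r_emb : IsOEmbedding T T r := (IsOEmbedding.id T).congr hr
  have retract : ∀ x : Φ.F T, isoClassO (Φ.res r r_emb x) =
      isoClassO (x) :=
    isoClassO_res r_emb fun b hb => ⟨b, hb, hr b hb⟩
  rw [← retract (Φ.res f hf s), ← retract (Φ.res g hg s),
    ← Φ.res_comp r f r_emb hf (hf.comp r_emb), ← Φ.res_comp r g r_emb hg (hg.comp r_emb)]
  exact congrArg isoClassO (res_eq_of_eq (funext fun a => hfg _ (hrT a)) _ _ s)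

/-- The class of a restriction depends only on the image of the embedding. -/
theorem isoClassO_res_eq_of_image_eq {T₁ T₂ T : OTree} {g₁ g₂ : List ℕ → List ℕ}
    (h₁ : IsOEmbedding T₁ T g₁) (h₂ : IsOEmbedding T₂ T g₂)
    (him : g₁ '' {a | IsVtxO a T₁} = g₂ '' {a | IsVtxO a T₂}) (s : Φ.F T) :
    isoClassO (Φ.res g₁ h₁ s) = isoClassO (Φ.res g₂ h₂ s) := by
  have hex : ∀ a, ∃ b, IsVtxO a T₁ → IsVtxO b T₂ ∧ g₂ b = g₁ a := fun a => by
    by_cases ha : IsVtxO a T₁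
    · obtain ⟨b, hb, hba⟩ := him.subset ⟨a, ha, rfl⟩
      exact ⟨b, fun _ => ⟨hb, hba⟩⟩
    · exact ⟨[], fun h => absurd h ha⟩
  choose f hf using hex
  have f_emb : IsOEmbedding T₁ T₂ f := by
    refine ⟨fun a ha => (hf a ha).1, fun a b ha hb hab => ?_, fun a i ha => ?_⟩
    · exact h₁.2.1 a b ha hb (by rw [← (hf a ha).2, ← (hf b hb).2, hab])
    · have ha' := ha.of_append
      refine (h₁.2.2 a i ha).imp (fun h => ⟨h.1, ?_⟩) fun h => ⟨h.1, ?_⟩ <;>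
        refine h₂.dirEdge_of_map (hf _ ‹_›).1 (hf _ ‹_›).1 ?_ <;>
        rw [(hf _ ha).2, (hf _ ha').2] <;> exact h.2
  have surj : ∀ b, IsVtxO b T₂ → ∃ a, IsVtxO a T₁ ∧ f a = b := fun b hb => by
    obtain ⟨a, ha, hab⟩ := him.superset ⟨b, hb, rfl⟩
    exact ⟨a, ha, h₂.2.1 _ _ (hf a ha).1 hb ((hf a ha).2.trans hab)⟩
  calc isoClassO (Φ.res g₁ h₁ s)
      = isoClassO (Φ.res (g₂ ∘ f) (h₂.comp f_emb) s) :=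
        isoClassO_res_congr _ _ (fun a ha => (hf a ha).2.symm) s
    _ = isoClassO (Φ.res f f_emb (Φ.res g₂ h₂ s)) := by
        rw [Φ.res_comp f g₂ f_emb h₂]
    _ = _ := isoClassO_res f_emb surj _

/-- The class of the restriction of a pair `(T, s)` to the subtree with vertex set `S`
(a junk value if `S` does not span a subtree). -/
def restrClassO (s : Φ.F T₀) (S : Set (List ℕ)) : OTSIso Φ :=
  if h : ∃ (T : OTree) (g : List ℕ → List ℕ) (_ : IsOEmbedding T T₀ g),
      g '' {a | IsVtxO a T} = S
  then isoClassO (Φ.res _ h.choose_spec.choose_spec.choose s)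
  else isoClassO s

theorem isoClassO_res_eq_restrClassO (s : Φ.F T₀) {S : Set (List ℕ)} {T : OTree} {g : List ℕ → List ℕ}
    (hg : IsOEmbedding T T₀ g) (hS : g '' {a | IsVtxO a T} = S) :
    isoClassO (Φ.res g hg s) = restrClassO s S := by
  have h : ∃ (T : OTree) (g : List ℕ → List ℕ) (_ : IsOEmbedding T T₀ g),
      g '' {a | IsVtxO a T} = S := ⟨T, g, hg, hS⟩
  rw [restrClassO, dif_pos h]
  exact isoClassO_res_eq_of_image_eq _ _ (hS.trans h.choose_spec.choose_spec.choose_spec.symm) _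

theorem isoClassO_eq_restrClassO (s : Φ.F T₀) :
    isoClassO s = restrClassO s {a | IsVtxO a T₀} := by
  rw [← isoClassO_res_eq_restrClassO s (IsOEmbedding.id T₀) (Set.image_id _), Φ.res_id]

end Classes

/-! ### The cobracket on restrictions of a fixed pair -/

variable {Φ} {T₀ : OTree}

/-- The basis vector of the class of the restriction of `p` to `S`. -/
def restrVecO (s : Φ.F T₀) (S : Set (List ℕ)) : TorS k Φ := Finsupp.single (restrClassO s S) 1

/-- The sign of an edge: positive if it is oriented away from the root. -/
def edgeSignO (T : OTree) (e : List ℕ) : k := if flagAtO e T = some true then 1 else -1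

/-- The summand of the cobracket of the restriction of `p` to `S` given by the edge `e`. -/
def cutTermO (s : Φ.F T₀) (S : Set (List ℕ)) (e : List ℕ) : TorS k Φ ⊗[k] TorS k Φ :=
  edgeSignO k T₀ e •
    (restrVecO k s {x | x ∈ S ∧ ¬ e <+: x} ⊗ₜ[k] restrVecO k s {x | x ∈ S ∧ e <+: x} -
      restrVecO k s {x | x ∈ S ∧ e <+: x} ⊗ₜ[k] restrVecO k s {x | x ∈ S ∧ ¬ e <+: x})

/-- The edges of `T` with both endpoints in `S`. -/
def edgesInO (T : OTree) (S : Set (List ℕ)) : Finset (List ℕ) :=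
  (edgeFinsetO T).filter fun e => e ∈ S ∧ e.dropLast ∈ S

theorem IsVtxO.dropLast {e : List ℕ} {T : OTree} (h : IsVtxO e T) : IsVtxO e.dropLast T := by
  cases e using List.reverseRecOn with
  | nil => exact h
  | append_singleton a i => simpa using h.of_append

variable {k} in
theorem neg_one_smul_sub {M : Type*} [AddCommGroup M] [Module k M] (x y : M) :
    (-1 : k) • (x - y) = y - x := by
  rw [neg_smul, one_smul, neg_sub]

variable {k} in
theorem lift_single_one {M X : Type*} [AddCommGroup M] [Module k M] (f : X → M) (x : X) :
    Finsupp.lift M k X f (Finsupp.single x 1) = f x := by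
  simp

theorem rhoOSTerm_res (s : Φ.F T₀) {T : OTree} {g : List ℕ → List ℕ} (hg : IsOEmbedding T T₀ g)
    {e : List ℕ} (hv : IsVtxO e T) (he : e ≠ []) :
    rhoOSTerm k Φ (pairO (Φ.res g hg s)) e =
      cutTermO k s (g '' {a | IsVtxO a T}) (edgeMapO g e) := by
  obtain ⟨A, hA⟩ := exists_subAtO hv
  have h1 := isOEmbedding_append hA hv
  have h2 := isOEmbedding_pruneEmbO hv
  have eA : isoClassO (Φ.res _ h1 (Φ.res g hg s)) =
      restrClassO s (g '' {x | IsVtxO x T ∧ e <+: x}) := by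
    rw [← Φ.res_comp _ g h1 hg (hg.comp h1)]
    exact isoClassO_res_eq_restrClassO s _ (by rw [Set.image_comp, image_append hA hv])
  have eB : isoClassO (Φ.res _ h2 (Φ.res g hg s)) =
      restrClassO s (g '' {x | IsVtxO x T ∧ ¬ e <+: x}) := by
    rw [← Φ.res_comp _ g h2 hg (hg.comp h2)]
    exact isoClassO_res_eq_restrClassO s _ (by rw [Set.image_comp, image_pruneEmbO hv he])
  have hterm : rhoOSTerm k Φ (pairO (Φ.res g hg s)) e = edgeSignO k T e •
      (restrVecO k s (g '' {x | IsVtxO x T ∧ ¬ e <+: x}) ⊗ₜ[k]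
          restrVecO k s (g '' {x | IsVtxO x T ∧ e <+: x}) -
        restrVecO k s (g '' {x | IsVtxO x T ∧ e <+: x}) ⊗ₜ[k]
          restrVecO k s (g '' {x | IsVtxO x T ∧ ¬ e <+: x})) := by
    have hp : rhoOSTerm k Φ (pairO (Φ.res g hg s)) e =
        (if flagAtO e T = some true then Finsupp.single (isoClassO (Φ.res _ h2 (Φ.res g hg s))) 1
          else Finsupp.single (isoClassO (Φ.res _ h1 (Φ.res g hg s))) 1) ⊗ₜ[k]
        (if flagAtO e T = some true then Finsupp.single (isoClassO (Φ.res _ h1 (Φ.res g hg s))) 1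
          else Finsupp.single (isoClassO (Φ.res _ h2 (Φ.res g hg s))) 1) -
        (if flagAtO e T = some true then Finsupp.single (isoClassO (Φ.res _ h1 (Φ.res g hg s))) 1
          else Finsupp.single (isoClassO (Φ.res _ h2 (Φ.res g hg s))) 1) ⊗ₜ[k]
        (if flagAtO e T = some true then Finsupp.single (isoClassO (Φ.res _ h2 (Φ.res g hg s))) 1
          else Finsupp.single (isoClassO (Φ.res _ h1 (Φ.res g hg s))) 1) := by
      unfold rhoOSTerm
      split
      · rename_i A' hA'
        obtain rfl : A = A' := Option.some_injective _ (hA.symm.trans hA')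
        exact dif_pos ⟨h1, h2⟩
      · rename_i hA'
        exact absurd (hA.symm.trans hA') (by simp)
    rw [hp, eA, eB, edgeSignO]
    split_ifs
    · rw [one_smul]; rfl
    · exact (neg_one_smul_sub _ _).symm
  obtain ⟨o, ho⟩ := Option.isSome_iff_exists.1 (((isVtxO_iff_flagAtO _ _).1 hv).resolve_left he)
  rw [hterm, cutTermO, edgeSignO, edgeSignO]
  rcases hg.edgeMapO_spec hv he with ⟨-, -, -, hf, hs⟩ | ⟨-, -, -, hf, hs⟩
  · have s1 : {x | x ∈ g '' {a | IsVtxO a T} ∧ edgeMapO g e <+: x} =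
        g '' {x | IsVtxO x T ∧ e <+: x} := by
      ext x; constructor
      · rintro ⟨⟨c, hc, rfl⟩, hx⟩; exact ⟨c, ⟨hc, (hs c hc).1 hx⟩, rfl⟩
      · rintro ⟨c, ⟨hc, hx⟩, rfl⟩; exact ⟨⟨c, hc, rfl⟩, (hs c hc).2 hx⟩
    have s2 : {x | x ∈ g '' {a | IsVtxO a T} ∧ ¬ edgeMapO g e <+: x} =
        g '' {x | IsVtxO x T ∧ ¬ e <+: x} := by
      ext x; constructor
      · rintro ⟨⟨c, hc, rfl⟩, hx⟩; exact ⟨c, ⟨hc, mt (hs c hc).2 hx⟩, rfl⟩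
      · rintro ⟨c, ⟨hc, hx⟩, rfl⟩; exact ⟨⟨c, hc, rfl⟩, mt (hs c hc).1 hx⟩
    rw [s1, s2, hf]
  · have s1 : {x | x ∈ g '' {a | IsVtxO a T} ∧ edgeMapO g e <+: x} =
        g '' {x | IsVtxO x T ∧ ¬ e <+: x} := by
      ext x; constructor
      · rintro ⟨⟨c, hc, rfl⟩, hx⟩; exact ⟨c, ⟨hc, (hs c hc).1 hx⟩, rfl⟩
      · rintro ⟨c, ⟨hc, hx⟩, rfl⟩; exact ⟨⟨c, hc, rfl⟩, (hs c hc).2 hx⟩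
    have s2 : {x | x ∈ g '' {a | IsVtxO a T} ∧ ¬ edgeMapO g e <+: x} =
        g '' {x | IsVtxO x T ∧ e <+: x} := by
      ext x; constructor
      · rintro ⟨⟨c, hc, rfl⟩, hx⟩
        exact ⟨c, ⟨hc, not_not.1 (mt (hs c hc).2 hx)⟩, rfl⟩
      · rintro ⟨c, ⟨hc, hx⟩, rfl⟩
        exact ⟨⟨c, hc, rfl⟩, fun h => (hs c hc).1 h hx⟩
    rw [s1, s2, hf, ho]
    cases o
    · simp only [Option.map_some, Bool.not_false, if_true, Option.some.injEq, Bool.false_eq_true,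
        if_false, one_smul]
      exact neg_one_smul_sub _ _
    · simp only [Option.map_some, Bool.not_true, if_true, Option.some.injEq, Bool.false_eq_true,
        if_false, one_smul]
      exact (neg_one_smul_sub _ _).symm

theorem edgeMapO_bijOn {T T' : OTree} {g : List ℕ → List ℕ} (hg : IsOEmbedding T T' g) :
    Set.BijOn (edgeMapO g) (edgeFinsetO T) (edgesInO T' (g '' {a | IsVtxO a T})) := by
  refine ⟨fun e he => ?_, fun e he e' he' hee => ?_, fun d hd => ?_⟩
  · obtain ⟨hv, hne⟩ := mem_edgeFinsetO.1 he
    have i1 : g e ∈ g '' {a | IsVtxO a T} := ⟨e, hv, rfl⟩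
    have i2 : g e.dropLast ∈ g '' {a | IsVtxO a T} := ⟨_, hv.dropLast, rfl⟩
    simp only [edgesInO, Finset.coe_filter, mem_edgeFinsetO]
    rcases hg.edgeMapO_spec hv hne with ⟨h1, h2, h3, -⟩ | ⟨h1, h2, h3, -⟩
    · exact ⟨⟨h1 ▸ hg.1 _ hv, h1 ▸ h3⟩, h1 ▸ i1, h2 ▸ i2⟩
    · exact ⟨⟨h1 ▸ hg.1 _ hv.dropLast, h1 ▸ h3⟩, h1 ▸ i2, h2 ▸ i1⟩
  · obtain ⟨hv, hne⟩ := mem_edgeFinsetO.1 he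
    obtain ⟨hv', hne'⟩ := mem_edgeFinsetO.1 he'
    have l1 := List.length_pos_iff.2 hne
    have l2 := List.length_pos_iff.2 hne'
    have cross : g e = g e'.dropLast → g e.dropLast = g e' → e = e' := fun h h' => by
      have e1 := congrArg List.length (hg.2.1 _ _ hv hv'.dropLast h)
      have e2 := congrArg List.length (hg.2.1 _ _ hv.dropLast hv' h')
      simp only [List.length_dropLast] at e1 e2
      omega
    rcases hg.edgeMapO_spec hv hne with ⟨h1, h2, -⟩ | ⟨h1, h2, -⟩ <;>
      rcases hg.edgeMapO_spec hv' hne' with ⟨h1', h2', -⟩ | ⟨h1', h2', -⟩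
    · exact hg.2.1 _ _ hv hv' (by rw [← h1, ← h1', hee])
    · exact cross (by rw [← h1, ← h1', hee]) (by rw [← h2, ← h2', hee])
    · exact cross (by rw [← h2, ← h2', hee]) (by rw [← h1, ← h1', hee])
    · exact hg.2.1 _ _ hv hv' (by rw [← h2, ← h2', hee])
  · simp only [edgesInO, Finset.coe_filter, mem_edgeFinsetO] at hd
    obtain ⟨⟨-, hne⟩, ⟨b, hb, rfl⟩, ⟨a, ha, hab⟩⟩ := hd
    have hlt : (g a).length < (g b).length := by
      have := List.length_pos_iff.2 hne
      rw [hab, List.length_dropLast]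
      omega
    rcases hg.adj_of_eq ha hb hne hab with ⟨i, rfl⟩ | ⟨i, rfl⟩
    · exact ⟨a ++ [i], mem_edgeFinsetO.2 ⟨hb, by simp⟩, by simp [edgeMapO, hlt]⟩
    · exact ⟨b ++ [i], mem_edgeFinsetO.2 ⟨ha, by simp⟩, by simp [edgeMapO, hlt.le]⟩

theorem sum_rhoOSTerm_res (s : Φ.F T₀) {T : OTree} {g : List ℕ → List ℕ}
    (hg : IsOEmbedding T T₀ g) :
    ∑ e ∈ edgeFinsetO T, rhoOSTerm k Φ (pairO (Φ.res g hg s)) e =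
      ∑ e ∈ edgesInO T₀ (g '' {a | IsVtxO a T}), cutTermO k s (g '' {a | IsVtxO a T}) e := by
  have hb := edgeMapO_bijOn hg
  refine Finset.sum_nbij (edgeMapO g) (fun e he => hb.mapsTo he) hb.injOn hb.surjOn fun e he => ?_
  obtain ⟨hv, hne⟩ := mem_edgeFinsetO.1 he
  exact rhoOSTerm_res k s hg hv hne

theorem sum_rhoOSTerm_congr {p q : OTS Φ} (h : pairRelO Φ p q) :
    ∑ e ∈ edgeFinsetO p.1, rhoOSTerm k Φ p e = ∑ e ∈ edgeFinsetO q.1, rhoOSTerm k Φ q e := by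
  obtain ⟨T, s⟩ := p
  obtain ⟨T', s'⟩ := q
  obtain ⟨f, hf, hsurj, hs⟩ := h
  change IsOEmbedding T T' f at hf
  change Φ.res f hf s' = s at hs
  subst hs
  have him : f '' {a | IsVtxO a T} = id '' {a | IsVtxO a T'} := by
    rw [Set.image_id]
    ext b
    exact ⟨fun ⟨a, ha, hab⟩ => hab ▸ hf.1 a ha, fun hb => hsurj b hb⟩
  have h1 := sum_rhoOSTerm_res k s' hf
  have h2 := sum_rhoOSTerm_res k s' (IsOEmbedding.id T')
  rw [Φ.res_id, ← him] at h2
  exact h1.trans h2.symm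

theorem rhoOS_single (s : Φ.F T₀) :
    rhoOS k Φ (Finsupp.single (isoClassO s) 1) =
      ∑ e ∈ edgeFinsetO T₀, rhoOSTerm k Φ (pairO s) e := by
  have h : rhoOS k Φ (Finsupp.single (isoClassO s) 1) =
      lsum ((edgeListO (Quot.out (isoClassO s)).1).map
        (rhoOSTerm k Φ (Quot.out (isoClassO s)))) := by
    unfold rhoOS
    exact lift_single_one (k := k) (fun q : OTSIso Φ =>
      lsum ((edgeListO q.out.1).map (rhoOSTerm k Φ q.out))) (isoClassO s)
  rw [h, lsum_map_edgeListO]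
  exact congrArg (Quot.lift (fun q : OTS Φ => ∑ e ∈ edgeFinsetO q.1, rhoOSTerm k Φ q e)
    fun _ _ h => sum_rhoOSTerm_congr k h) (Quot.out_eq (isoClassO s))

theorem rhoOS_restrVecO (s : Φ.F T₀) {T : OTree} {g : List ℕ → List ℕ}
    (hg : IsOEmbedding T T₀ g) {S : Set (List ℕ)} (hS : g '' {a | IsVtxO a T} = S) :
    rhoOS k Φ (restrVecO k s S) = ∑ e ∈ edgesInO T₀ S, cutTermO k s S e := by
  rw [restrVecO, ← isoClassO_res_eq_restrClassO s hg hS, rhoOS_single, sum_rhoOSTerm_res, hS]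

theorem rhoOS_single_eq_sum_cutTermO (s : Φ.F T₀) :
    rhoOS k Φ (Finsupp.single (isoClassO s) 1) =
      ∑ e ∈ edgeFinsetO T₀, cutTermO k s {a | IsVtxO a T₀} e := by
  rw [isoClassO_eq_restrClassO]
  refine (rhoOS_restrVecO k s (IsOEmbedding.id T₀) (Set.image_id _)).trans
    (Finset.sum_congr (Finset.filter_true_of_mem fun e he => ?_) fun _ _ => rfl)
  have := (mem_edgeFinsetO.1 he).1
  exact ⟨this, this.dropLast⟩

theorem TorS.hom_ext {M : Type*} [AddCommMonoid M] [Module k M] {f g : TorS k Φ →ₗ[k] M}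
    (h : ∀ (T : OTree) (s : Φ.F T), f (Finsupp.single (isoClassO s) 1) =
      g (Finsupp.single (isoClassO s) 1)) : f = g := by
  refine Finsupp.lhom_ext' fun q => LinearMap.ext_ring ?_
  induction q using Quot.ind with
  | mk p => exact h p.1 p.2

theorem edgesInO_below (T : OTree) (e : List ℕ) :
    edgesInO T {x | x ∈ {a | IsVtxO a T} ∧ e <+: x} =
      {f ∈ (edgeFinsetO T).erase e | e <+: f} := by
  ext f
  simp only [edgesInO, Finset.mem_filter, Finset.mem_erase, mem_edgeFinsetO, Set.mem_ofPred_eq]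
  constructor
  · rintro ⟨⟨hv, hne⟩, ⟨-, h1⟩, -, h2⟩
    exact ⟨⟨fun h => not_prefix_dropLast hne (h ▸ h2), hv, hne⟩, h1⟩
  · rintro ⟨⟨hef, hv, hne⟩, h⟩
    refine ⟨⟨hv, hne⟩, ⟨hv, h⟩, hv.dropLast, ?_⟩
    obtain ⟨a, i, rfl⟩ := (List.eq_nil_or_concat f).resolve_left hne
    simp only [List.concat_eq_append, List.prefix_concat_iff, List.dropLast_concat] at *
    exact h.resolve_left (Ne.symm hef)

theorem edgesInO_above (T : OTree) (e : List ℕ) :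
    edgesInO T {x | x ∈ {a | IsVtxO a T} ∧ ¬ e <+: x} =
      {f ∈ (edgeFinsetO T).erase e | ¬ e <+: f} := by
  ext f
  simp only [edgesInO, Finset.mem_filter, Finset.mem_erase, mem_edgeFinsetO, Set.mem_ofPred_eq]
  constructor
  · rintro ⟨hv, ⟨-, h1⟩, -⟩
    exact ⟨⟨fun h => h1 (h ▸ List.prefix_rfl), hv⟩, h1⟩
  · rintro ⟨⟨-, hv, hne⟩, h⟩
    exact ⟨⟨hv, hne⟩, ⟨hv, h⟩, hv.dropLast, fun h' => h (h'.trans (List.dropLast_prefix f))⟩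

theorem rhoOS_restrVecO_below (s : Φ.F T₀) {e : List ℕ} (he : e ∈ edgeFinsetO T₀) :
    rhoOS k Φ (restrVecO k s {x | x ∈ {a | IsVtxO a T₀} ∧ e <+: x}) =
      ∑ f ∈ (edgeFinsetO T₀).erase e with e <+: f,
        cutTermO k s {x | x ∈ {a | IsVtxO a T₀} ∧ e <+: x} f := by
  have hv := (mem_edgeFinsetO.1 he).1
  obtain ⟨A, hA⟩ := exists_subAtO hv
  rw [← edgesInO_below]
  exact rhoOS_restrVecO k s (isOEmbedding_append hA hv) (image_append hA hv)

theorem rhoOS_restrVecO_above (s : Φ.F T₀) {e : List ℕ} (he : e ∈ edgeFinsetO T₀) :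
    rhoOS k Φ (restrVecO k s {x | x ∈ {a | IsVtxO a T₀} ∧ ¬ e <+: x}) =
      ∑ f ∈ (edgeFinsetO T₀).erase e with ¬ e <+: f,
        cutTermO k s {x | x ∈ {a | IsVtxO a T₀} ∧ ¬ e <+: x} f := by
  obtain ⟨hv, hne⟩ := mem_edgeFinsetO.1 he
  rw [← edgesInO_above]
  exact rhoOS_restrVecO k s (isOEmbedding_pruneEmbO hv) (image_pruneEmbO hv hne)

section Jacobi

variable {k} {g : Type*} [AddCommGroup g] [Module k g]

theorem tau2_sum_smul_sub {ι : Type*} (t : Finset ι) (c : ι → k) (x y : ι → g) :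
    tau2 k g (∑ i ∈ t, c i • (x i ⊗ₜ[k] y i - y i ⊗ₜ[k] x i)) =
      -∑ i ∈ t, c i • (x i ⊗ₜ[k] y i - y i ⊗ₜ[k] x i) := by
  simp [tau2, ← Finset.sum_neg_distrib, ← smul_neg]

variable (k g) in
/-- `(Id + τ_{(123)} + τ_{(132)})` on `(g ⊗ g) ⊗ g`. -/
def cyclicSum : (g ⊗[k] g) ⊗[k] g →ₗ[k] g ⊗[k] (g ⊗[k] g) :=
  (LinearMap.id + tau123 k g + tau132 k g) ∘ₗ (TensorProduct.assoc k g g g).toLinearMap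

theorem cyclicSum_tmul (x y z : g) : cyclicSum k g ((x ⊗ₜ[k] y) ⊗ₜ[k] z) =
    x ⊗ₜ[k] (y ⊗ₜ[k] z) + z ⊗ₜ[k] (x ⊗ₜ[k] y) + y ⊗ₜ[k] (z ⊗ₜ[k] x) := by
  simp [cyclicSum, tau123, tau132]

theorem cyclicSum_add_cyclicSum (c : k) (m a b : g) :
    cyclicSum k g ((c • (m ⊗ₜ[k] a - a ⊗ₜ[k] m)) ⊗ₜ[k] b) +
      cyclicSum k g ((c • (m ⊗ₜ[k] b - b ⊗ₜ[k] m)) ⊗ₜ[k] a) = 0 := by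
  simp only [← TensorProduct.smul_tmul', TensorProduct.sub_tmul, map_smul, map_sub,
    cyclicSum_tmul, ← smul_add]
  convert smul_zero c
  abel

/-- The cyclic sum of `(δ ⊗ Id)` applied to `c (x ⊗ y - y ⊗ x)`. -/
theorem cyclicSum_rTensor_smul_sub (δ : g →ₗ[k] g ⊗[k] g) (c : k) (x y : g) :
    cyclicSum k g (LinearMap.rTensor g δ (c • (x ⊗ₜ[k] y - y ⊗ₜ[k] x))) =
      cyclicSum k g ((c • δ x) ⊗ₜ[k] y) + cyclicSum k g ((-c • δ y) ⊗ₜ[k] x) := by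
  rw [map_smul, map_sub, LinearMap.rTensor_tmul, LinearMap.rTensor_tmul, map_smul, map_sub,
    smul_sub, ← TensorProduct.smul_tmul', ← TensorProduct.smul_tmul', map_smul, map_smul,
    neg_smul, sub_eq_add_neg]

theorem cyclicSum_smul_sum_tmul {ι : Type*} (t : Finset ι) (u : ι → g ⊗[k] g) (c : k) (y : g) :
    cyclicSum k g ((c • ∑ i ∈ t, u i) ⊗ₜ[k] y) = ∑ i ∈ t, cyclicSum k g ((c • u i) ⊗ₜ[k] y) := by
  rw [Finset.smul_sum, TensorProduct.sum_tmul, map_sum]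

end Jacobi

/-- The contribution to the co-Jacobi identity of deleting the edge `e` and then `f`. -/
def jacobiTermO (s : Φ.F T₀) (e f : List ℕ) : TorS k Φ ⊗[k] (TorS k Φ ⊗[k] TorS k Φ) :=
  if e <+: f then
    cyclicSum k (TorS k Φ)
      ((-edgeSignO k T₀ e • cutTermO k s {x | x ∈ {a | IsVtxO a T₀} ∧ e <+: x} f) ⊗ₜ[k]
        restrVecO k s {x | x ∈ {a | IsVtxO a T₀} ∧ ¬ e <+: x})
  else
    cyclicSum k (TorS k Φ)
      ((edgeSignO k T₀ e • cutTermO k s {x | x ∈ {a | IsVtxO a T₀} ∧ ¬ e <+: x} f) ⊗ₜ[k]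
        restrVecO k s {x | x ∈ {a | IsVtxO a T₀} ∧ e <+: x})

theorem cyclicSum_rTensor_cutTermO (s : Φ.F T₀) {e : List ℕ} (he : e ∈ edgeFinsetO T₀) :
    cyclicSum k (TorS k Φ) (LinearMap.rTensor (TorS k Φ) (rhoOS k Φ)
      (cutTermO k s {a | IsVtxO a T₀} e)) =
      ∑ f ∈ (edgeFinsetO T₀).erase e, jacobiTermO k s e f := by
  rw [← Finset.sum_filter_add_sum_filter_not _ (fun f => e <+: f), cutTermO,
    cyclicSum_rTensor_smul_sub, rhoOS_restrVecO_below k s he, rhoOS_restrVecO_above k s he,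
    cyclicSum_smul_sum_tmul, cyclicSum_smul_sum_tmul, add_comm]
  congr 1
  · exact Finset.sum_congr rfl fun f hf => (if_pos (Finset.mem_filter.1 hf).2).symm
  · exact Finset.sum_congr rfl fun f hf => (if_neg (Finset.mem_filter.1 hf).2).symm

theorem jacobiTermO_add_of_prefix (s : Φ.F T₀) {e f : List ℕ} (hef : e ≠ f) (h : e <+: f) :
    jacobiTermO k s e f + jacobiTermO k s f e = 0 := by
  have h' : ¬ f <+: e := fun h' => hef (h.eq_of_length_le h'.length_le)
  have s1 : {x | x ∈ {x | x ∈ {a | IsVtxO a T₀} ∧ e <+: x} ∧ f <+: x} =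
      {x | x ∈ {a | IsVtxO a T₀} ∧ f <+: x} := by
    ext x
    exact ⟨fun hx => ⟨hx.1.1, hx.2⟩, fun hx => ⟨⟨hx.1, h.trans hx.2⟩, hx.2⟩⟩
  have s2 : {x | x ∈ {x | x ∈ {a | IsVtxO a T₀} ∧ ¬ f <+: x} ∧ ¬ e <+: x} =
      {x | x ∈ {a | IsVtxO a T₀} ∧ ¬ e <+: x} := by
    ext x
    exact ⟨fun hx => ⟨hx.1.1, hx.2⟩, fun hx => ⟨⟨hx.1, fun hf => hx.2 (h.trans hf)⟩, hx.2⟩⟩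
  have s3 : {x | x ∈ {x | x ∈ {a | IsVtxO a T₀} ∧ ¬ f <+: x} ∧ e <+: x} =
      {x | x ∈ {x | x ∈ {a | IsVtxO a T₀} ∧ e <+: x} ∧ ¬ f <+: x} := by
    ext x
    exact ⟨fun hx => ⟨⟨hx.1.1, hx.2⟩, hx.1.2⟩, fun hx => ⟨⟨hx.1.1, hx.2⟩, hx.1.2⟩⟩
  rw [jacobiTermO, jacobiTermO, if_pos h, if_neg h', cutTermO, cutTermO, s1, s2, s3, smul_smul,
    smul_smul, ← neg_one_smul_sub (k := k) (restrVecO k s _ ⊗ₜ[k] restrVecO k s _)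
      (restrVecO k s {x | x ∈ {a | IsVtxO a T₀} ∧ ¬ e <+: x} ⊗ₜ[k] restrVecO k s _), smul_smul]
  rw [show edgeSignO k T₀ f * edgeSignO k T₀ e * -1 = -edgeSignO k T₀ e * edgeSignO k T₀ f by ring]
  exact cyclicSum_add_cyclicSum _ _ _ _

theorem jacobiTermO_add_of_not_prefix (s : Φ.F T₀) {e f : List ℕ} (h : ¬ e <+: f)
    (h' : ¬ f <+: e) : jacobiTermO k s e f + jacobiTermO k s f e = 0 := by
  have disj : ∀ x : List ℕ, e <+: x → ¬ f <+: x := fun x hx hx' =>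
    (List.prefix_or_prefix_of_prefix hx hx').elim h h'
  have s1 : {x | x ∈ {x | x ∈ {a | IsVtxO a T₀} ∧ ¬ e <+: x} ∧ f <+: x} =
      {x | x ∈ {a | IsVtxO a T₀} ∧ f <+: x} := by
    ext x
    exact ⟨fun hx => ⟨hx.1.1, hx.2⟩, fun hx => ⟨⟨hx.1, fun hx' => disj x hx' hx.2⟩, hx.2⟩⟩
  have s2 : {x | x ∈ {x | x ∈ {a | IsVtxO a T₀} ∧ ¬ f <+: x} ∧ e <+: x} =
      {x | x ∈ {a | IsVtxO a T₀} ∧ e <+: x} := by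
    ext x
    exact ⟨fun hx => ⟨hx.1.1, hx.2⟩, fun hx => ⟨⟨hx.1, disj x hx.2⟩, hx.2⟩⟩
  have s3 : {x | x ∈ {x | x ∈ {a | IsVtxO a T₀} ∧ ¬ f <+: x} ∧ ¬ e <+: x} =
      {x | x ∈ {x | x ∈ {a | IsVtxO a T₀} ∧ ¬ e <+: x} ∧ ¬ f <+: x} := by
    ext x
    exact ⟨fun hx => ⟨⟨hx.1.1, hx.2⟩, hx.1.2⟩, fun hx => ⟨⟨hx.1.1, hx.2⟩, hx.1.2⟩⟩
  rw [jacobiTermO, jacobiTermO, if_neg h, if_neg h', cutTermO, cutTermO, s1, s2, s3, smul_smul,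
    smul_smul, mul_comm (edgeSignO k T₀ f)]
  exact cyclicSum_add_cyclicSum _ _ _ _

theorem jacobiTermO_add (s : Φ.F T₀) {e f : List ℕ} (hef : e ≠ f) :
    jacobiTermO k s e f + jacobiTermO k s f e = 0 := by
  by_cases h : e <+: f
  · exact jacobiTermO_add_of_prefix k s hef h
  by_cases h' : f <+: e
  · rw [add_comm]
    exact jacobiTermO_add_of_prefix k s hef.symm h'
  · exact jacobiTermO_add_of_not_prefix k s h h'

theorem sum_jacobiTermO (s : Φ.F T₀) :
    ∑ e ∈ edgeFinsetO T₀, ∑ f ∈ (edgeFinsetO T₀).erase e, jacobiTermO k s e f = 0 := by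
  rw [Finset.sum_sigma']
  refine Finset.sum_involution (fun p _ => ⟨p.2, p.1⟩) (fun p hp => ?_) (fun p hp _ h => ?_)
    (fun p hp => ?_) fun _ _ => rfl
  all_goals simp only [Finset.mem_sigma, Finset.mem_erase] at hp ⊢
  · exact jacobiTermO_add k s hp.2.1.symm
  · exact hp.2.1 (congrArg Sigma.fst h)
  · exact ⟨hp.2.2, hp.2.1.symm, hp.1⟩

variable (Φ)

/-- For every oriented tree-structure `Φ`, the above map is a Lie
cobracket on `T_or(Φ)`. -/
theorem rhoOS_isLieCobracket : IsLieCobracket (rhoOS k Φ) := by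
  refine ⟨TorS.hom_ext k fun T s => ?_, TorS.hom_ext k fun T s => ?_⟩
  · change tau2 k (TorS k Φ) (rhoOS k Φ _) = -rhoOS k Φ _
    rw [rhoOS_single_eq_sum_cutTermO]
    exact tau2_sum_smul_sub _ _ _ _
  · calc cyclicSum k (TorS k Φ) (LinearMap.rTensor (TorS k Φ) (rhoOS k Φ)
          (rhoOS k Φ (Finsupp.single (isoClassO s) 1)))
        = ∑ e ∈ edgeFinsetO T, ∑ f ∈ (edgeFinsetO T).erase e, jacobiTermO k s e f := by
          rw [rhoOS_single_eq_sum_cutTermO, map_sum, map_sum]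
          exact Finset.sum_congr rfl fun e he => cyclicSum_rTensor_cutTermO k s he
      _ = 0 := sum_jacobiTermO k s

end
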